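/- arXiv:1403.1409 — 4 statements merged into one kernel-verified Lean document; each statement's English description precedes it below -/
import Mathlib

section
/- Let K be an algebraically closed field, S = K[x_1,…,x_r] with r ≥ 3, and J ⊆ S a homogeneous artinian ideal with dim_K [S/J]_n = k and dim_K [S/J]_{n+1} = k−1, where 2 ≤ k ≤ n, [S/J]_t = 0 for t ≥ n+2, J has no minimal generator in degree n+1, and the forms in [J]_n have no common zero in ℙ^{r−1}. Then the set of linear forms ℓ ∈ [S]_1 with ℓ·[S]_{n−1} ⊆ J, together with 0, is a K-vector subspace of [S]_1 of dimension exactly r−2; in particular there exist r−2 linearly independent linear forms annihilating both [S/J]_{n−1} and [S/J]_n, and when r = 3 such a linear form is unique up to scalar multiplication. -/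
open MvPolynomial

/-- The Hilbert function of `S/I` in degree `t`: the dimension over `K` of the image of the
space of homogeneous polynomials of degree `t` in the quotient `S/I`. -/
noncomputable def hilb {K : Type*} [Field K] {σ : Type*} (I : Ideal (MvPolynomial σ K)) (t : ℕ) : ℕ :=
  Module.finrank K
    ((homogeneousSubmodule σ K t).map (Ideal.Quotient.mkₐ K I).toLinearMap)

/-- The ideal generated by the degree-`n` component of `I`, i.e. by all homogeneous elements of
`I` of degree `n`.  Its zero locus is the base locus of the linear system `[I]_n`. -/
noncomputable def compIdeal {K : Type*} [Field K] {σ : Type*} (I : Ideal (MvPolynomial σ K)) (n : ℕ) :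
    Ideal (MvPolynomial σ K) :=
  Ideal.span ((I : Set (MvPolynomial σ K)) ∩ (homogeneousSubmodule σ K n : Set (MvPolynomial σ K)))

/-!
Let `V` and `W` be the parts of degree `n` and `n + 1` of Macaulay's inverse system of `J`, of
dimensions `k` and `k - 1`. Linear forms act by contraction, mapping `W` into `V`, and a linear form
multiplies the forms of degree `n - 1` into `J` if and only if it kills `V`.

By a Green-type argument, a general linear form is injective on any given space of at most `d`
functionals of degree `d`. If `l` is injective on `U` and on `l U`, and `a U ⊆ l U` for all linear
forms `a`, then the operators `l⁻¹ a` on `U` commute; a common eigenvector is a multiple of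
evaluation at a point, and `V` contains no such functional because `[J]_n` is basepoint free.
Applied to `U = a W`, this gives `dim a W < dim a V` unless `a W = 0`; applied to `U = W ∩ ker a`,
it gives `dim a V ≤ dim a W` if `a` is not injective on `W`. Hence a linear form that does not kill
`V` is injective on `W` and on `V`.

Now let `l` and `m` be independent modulo the forms that kill `V`. Then `V` is spanned by `l W` and
a single `m w`, so for every `b` some `b - c m` maps `V` into `l V`, and an eigenvalue `d` makes
`b - c m - d l` fail to be injective on `V`. This form therefore kills `V`, so the forms that kill
`V` have codimension two.
-/

open Module LinearMap

section Pencils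

variable {K D E : Type*} [Field K] [AddCommGroup D] [Module K D] [AddCommGroup E] [Module K E]

theorem finrank_map_add_finrank_inf_ker (f : D →ₗ[K] E) (U : Submodule K D)
    [FiniteDimensional K U] : finrank K (U.map f) + finrank K ↥(U ⊓ ker f) = finrank K U := by
  rw [← (f.domRestrict U).finrank_range_add_finrank_ker, range_domRestrict, ker_domRestrict,
    ← Submodule.finrank_map_subtype_eq U, Submodule.map_comap_subtype]

variable {f : D →ₗ[K] E} {U : Submodule K D}

theorem finrank_map_of_disjoint_ker [FiniteDimensional K U] (hf : Disjoint U (ker f)) :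
    finrank K (U.map f) = finrank K U := by
  rw [← finrank_map_add_finrank_inf_ker f U, hf.eq_bot, finrank_bot, add_zero]

theorem exists_leftInverse_of_disjoint_ker (hf : Disjoint U (ker f)) :
    ∃ p : E →ₗ[K] U, ∀ x : U, p (f x) = x := by
  obtain ⟨p, hp⟩ := (f.domRestrict U).exists_leftInverse_of_injective
    (ker_eq_bot.2 (injective_domRestrict_iff.2 hf))
  exact ⟨p, LinearMap.congr_fun hp⟩

theorem exists_end_apply_eq_of_map_le {g : D →ₗ[K] E} (hf : Disjoint U (ker f))
    (h : U.map g ≤ U.map f) : ∃ B : Module.End K U, ∀ x : U, f (B x) = g x := by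
  obtain ⟨p, hp⟩ := exists_leftInverse_of_disjoint_ker hf
  refine ⟨p ∘ₗ g.domRestrict U, fun x => ?_⟩
  obtain ⟨y, hy, hyx⟩ := h (Submodule.mem_map_of_mem x.2)
  have hpy : p (f y) = ⟨y, hy⟩ := hp ⟨y, hy⟩
  rw [comp_apply, domRestrict_apply, ← hyx, hpy]

theorem exists_not_disjoint_ker_sub_smul [IsAlgClosed K] [FiniteDimensional K U]
    {g : D →ₗ[K] E} (hU : U ≠ ⊥) (hf : Disjoint U (ker f)) (h : U.map g ≤ U.map f) :
    ∃ c : K, ¬ Disjoint U (ker (g - c • f)) := by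
  obtain ⟨B, hB⟩ := exists_end_apply_eq_of_map_le hf h
  have : Nontrivial U := Submodule.nontrivial_iff_ne_bot.2 hU
  obtain ⟨c, hc⟩ := Module.End.exists_eigenvalue B
  obtain ⟨x, hx⟩ := hc.exists_hasEigenvector
  refine ⟨c, fun hdisj => hx.2 (Subtype.ext (disjoint_ker.1 hdisj x x.2 ?_))⟩
  rw [LinearMap.sub_apply, LinearMap.smul_apply, ← hB, hx.apply_eq_smul, Submodule.coe_smul,
    map_smul, sub_self]

theorem finite_setOf_not_disjoint_ker_add_smul [FiniteDimensional K U] (g : D →ₗ[K] E)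
    (hf : Disjoint U (ker f)) : {t : K | ¬ Disjoint U (ker (f + t • g))}.Finite := by
  obtain ⟨p, hp⟩ := exists_leftInverse_of_disjoint_ker hf
  let B : Module.End K U := p ∘ₗ g.domRestrict U
  refine (B.finite_hasEigenvalue.image fun c => -c⁻¹).subset fun t ht => ?_
  obtain ⟨x, hxU, hx, hx0⟩ : ∃ x ∈ U, f x + t • g x = 0 ∧ x ≠ 0 := by
    simpa [disjoint_ker] using ht
  have hB : (⟨x, hxU⟩ : U) + t • p (g x) = 0 := by
    have hpx : p (f x) = ⟨x, hxU⟩ := hp ⟨x, hxU⟩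
    simpa only [map_add, map_smul, map_zero, hpx] using congrArg p hx
  have hx0' : (⟨x, hxU⟩ : U) ≠ 0 := fun h => hx0 (congrArg Subtype.val h)
  have ht0 : t ≠ 0 := by
    rintro rfl
    exact hx0' (by simpa only [zero_smul, add_zero] using hB)
  refine ⟨-t⁻¹, Module.End.hasEigenvalue_of_hasEigenvector (x := ⟨x, hxU⟩)
    ⟨Module.End.mem_eigenspace_iff.2 ?_, hx0'⟩, by simp⟩
  rw [neg_smul, ← smul_neg, eq_comm, inv_smul_eq_iff₀ ht0, eq_comm]
  exact eq_neg_of_add_eq_zero_right hB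

theorem exists_disjoint_ker_and_disjoint_ker [Infinite K] {L : Type*} [AddCommGroup L]
    [Module K L] (φ : L →ₗ[K] D →ₗ[K] E) {U₁ U₂ : Submodule K D} [FiniteDimensional K U₁]
    [FiniteDimensional K U₂] (h₁ : ∃ l, Disjoint U₁ (ker (φ l)))
    (h₂ : ∃ l, Disjoint U₂ (ker (φ l))) :
    ∃ l, Disjoint U₁ (ker (φ l)) ∧ Disjoint U₂ (ker (φ l)) := by
  obtain ⟨a, ha⟩ := h₁
  obtain ⟨b, hb⟩ := h₂
  have hfin₁ := finite_setOf_not_disjoint_ker_add_smul (φ b) ha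
  have hfin₂ := (finite_setOf_not_disjoint_ker_add_smul (φ a) hb).preimage inv_injective.injOn
  obtain ⟨t, ht⟩ := ((hfin₁.union hfin₂).union (Set.finite_singleton 0)).exists_notMem
  simp only [Set.mem_union, Set.mem_preimage, Set.mem_ofPred_eq, Set.mem_singleton_iff, not_or,
    not_not] at ht
  obtain ⟨⟨ht₁, ht₂⟩, ht0⟩ := ht
  have hinv : φ b + t⁻¹ • φ a = t⁻¹ • φ (a + t • b) := by
    rw [map_add, map_smul, smul_add, inv_smul_smul₀ ht0, add_comm]
  rw [hinv, ker_smul _ _ (inv_ne_zero ht0)] at ht₂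
  exact ⟨a + t • b, by rwa [map_add, map_smul], ht₂⟩

end Pencils

theorem sup_span_singleton_eq_of_finrank_eq_succ {K D : Type*} [Field K] [AddCommGroup D]
    [Module K D] {A V : Submodule K D} [FiniteDimensional K V] (hAV : A ≤ V)
    (hdim : finrank K V = finrank K A + 1) {u : D} (huV : u ∈ V) (huA : u ∉ A) :
    A ⊔ K ∙ u = V := by
  have hle : A ⊔ K ∙ u ≤ V := sup_le hAV ((Submodule.span_singleton_le_iff_mem u V).2 huV)
  have : FiniteDimensional K ↥(A ⊔ K ∙ u) := Submodule.finiteDimensional_of_le hle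
  have hlt : A < A ⊔ K ∙ u := left_lt_sup.2 fun h =>
    huA (h (Submodule.mem_span_singleton_self u))
  exact Submodule.eq_of_le_of_finrank_le hle (hdim ▸ Submodule.finrank_lt_finrank_of_lt hlt)

theorem exists_eq_smul_of_finrank_eq_one {K D : Type*} [Field K] [AddCommGroup D] [Module K D]
    {W : Submodule K D} (hW : finrank K W = 1) {x y : D} (hx : x ∈ W) (hx0 : x ≠ 0) (hy : y ∈ W) :
    ∃ c : K, y = c • x := by
  obtain ⟨c, hc⟩ := (finrank_eq_one_iff_of_nonzero' (⟨x, hx⟩ : W)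
    (mt (congrArg Subtype.val) hx0)).1 hW ⟨y, hy⟩
  exact ⟨c, (congrArg Subtype.val hc).symm⟩

theorem finrank_quotient_eq_two {K L : Type*} [Field K] [AddCommGroup L] [Module K L]
    {Z : Submodule K L} {l m : L} (hl : l ∉ Z) (hm : ∀ c : K, m - c • l ∉ Z)
    (h : ∀ b, ∃ c d : K, b - c • m - d • l ∈ Z) : finrank K (L ⧸ Z) = 2 := by
  have hli : LinearIndependent K ![Z.mkQ l, Z.mkQ m] := by
    refine (LinearIndependent.pair_iff' (by simpa using hl)).2 fun c hc => hm c ?_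
    rw [← Submodule.ker_mkQ Z, mem_ker, map_sub, map_smul, hc, sub_self]
  have hspan : ⊤ ≤ Submodule.span K (Set.range ![Z.mkQ l, Z.mkQ m]) := by
    intro x _
    obtain ⟨b, rfl⟩ := Submodule.mkQ_surjective Z x
    obtain ⟨c, d, hcd⟩ := h b
    rw [← Submodule.ker_mkQ Z, mem_ker, map_sub, map_sub, map_smul, map_smul, sub_sub,
      sub_eq_zero] at hcd
    rw [Matrix.range_cons_cons_empty, Submodule.mem_span_pair]
    exact ⟨d, c, by rw [hcd, add_comm]⟩
  rw [finrank_eq_card_basis (Basis.mk hli hspan), Fintype.card_fin]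

theorem exists_common_eigenvector {K U ι : Type*} [Field K] [IsAlgClosed K] [AddCommGroup U]
    [Module K U] [FiniteDimensional K U] [Nontrivial U] (f : ι → Module.End K U)
    (hf : ∀ i j, Commute (f i) (f j)) : ∃ x ≠ 0, ∀ i, ∃ c : K, f i x = c • x := by
  obtain ⟨E, ⟨hE0, hE⟩, hmin⟩ := exists_minimal_of_wellFoundedLT
    (fun E : Submodule K U => E ≠ ⊥ ∧ ∀ i, E ∈ (f i).invtSubmodule)
    ⟨⊤, top_ne_bot, fun i => Module.End.invtSubmodule.top_mem (f i)⟩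
  have : Nontrivial E := Submodule.nontrivial_iff_ne_bot.2 hE0
  have hscalar : ∀ i, ∃ c, E ≤ (f i).eigenspace c := by
    intro i
    obtain ⟨c, hc⟩ := Module.End.exists_eigenvalue ((f i).restrict (hE i))
    obtain ⟨x, hx⟩ := hc.exists_hasEigenvector
    have hxc : (x : U) ∈ (f i).eigenspace c :=
      Module.End.mem_eigenspace_iff.2 (congrArg Subtype.val hx.apply_eq_smul)
    have hne : E ⊓ (f i).eigenspace c ≠ ⊥ :=
      Submodule.ne_bot_iff _ |>.2 ⟨x, ⟨x.2, hxc⟩, fun h => hx.2 (Subtype.ext h)⟩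
    have hinv : ∀ j, E ⊓ (f i).eigenspace c ∈ (f j).invtSubmodule := fun j =>
      (f j).invtSubmodule.inf_mem (hE j)
        (Module.End.mapsTo_genEigenspace_of_comm (hf i j) c 1)
    exact ⟨c, (hmin ⟨hne, hinv⟩ inf_le_left).trans inf_le_right⟩
  obtain ⟨x, hxE, hx0⟩ := Submodule.exists_mem_ne_zero_of_ne_bot hE0
  exact ⟨x, hx0, fun i => (hscalar i).imp fun c hc => Module.End.mem_eigenspace_iff.1 (hc hxE)⟩

section LinearFamilies

variable {K L D : Type*} [Field K] [AddCommGroup L] [Module K L] [AddCommGroup D] [Module K D]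
  {φ : L →ₗ[K] Module.End K D}

/-- A vector is *pure* for a linear family of operators if the family moves it along a single
line.  For linear forms acting on homogeneous functionals by contraction, the pure functionals
are the multiples of evaluation at a point. -/
def IsPure (φ : L →ₗ[K] Module.End K D) (x : D) : Prop :=
  ∃ l, ∀ a, ∃ c : K, φ a x = c • φ l x

/-- The subspace of those members of a linear family of operators that vanish on `V`. -/
def linearAnnihilator (φ : L →ₗ[K] Module.End K D) (V : Submodule K D) : Submodule K L :=
  ker (domRestrict' V ∘ₗ φ)

theorem mem_linearAnnihilator {V : Submodule K D} {a : L} :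
    a ∈ linearAnnihilator φ V ↔ ∀ x ∈ V, φ a x = 0 := by
  simp [linearAnnihilator, LinearMap.ext_iff]

theorem IsPure.apply (hφ : ∀ a b x, φ a (φ b x) = φ b (φ a x)) {x : D} (hx : IsPure φ x) (b : L) :
    IsPure φ (φ b x) := by
  obtain ⟨l, hl⟩ := hx
  refine ⟨l, fun a => (hl a).imp fun c hc => ?_⟩
  rw [hφ, hc, map_smul, hφ b l]

theorem map_map_le_map (hφ : ∀ a b x, φ a (φ b x) = φ b (φ a x)) {V W : Submodule K D}
    (hWV : ∀ a, W.map (φ a) ≤ V) (a b : L) : (W.map (φ a)).map (φ b) ≤ V.map (φ a) := by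
  rintro _ ⟨_, ⟨x, hx, rfl⟩, rfl⟩
  exact ⟨φ b x, hWV b (Submodule.mem_map_of_mem hx), hφ a b x⟩

theorem map_inf_ker_le_inf_ker (hφ : ∀ a b x, φ a (φ b x) = φ b (φ a x)) {V W : Submodule K D}
    (hWV : ∀ a, W.map (φ a) ≤ V) (a b : L) : (W ⊓ ker (φ a)).map (φ b) ≤ V ⊓ ker (φ a) := by
  rintro _ ⟨x, ⟨hxW, hxa⟩, rfl⟩
  refine ⟨hWV b (Submodule.mem_map_of_mem hxW), ?_⟩
  rw [SetLike.mem_coe, mem_ker, hφ, mem_ker.1 hxa, map_zero]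

/-- The operators `(φ l)⁻¹ ∘ φ a` on `U` commute because `φ l` is injective on `U.map (φ l)`;
a common eigenvector of them is pure. -/
theorem exists_isPure_of_map_le [IsAlgClosed K] (hφ : ∀ a b x, φ a (φ b x) = φ b (φ a x))
    {U : Submodule K D} [FiniteDimensional K U] (hU : U ≠ ⊥) {l : L}
    (hl : Disjoint U (ker (φ l))) (hl' : Disjoint (U.map (φ l)) (ker (φ l)))
    (h : ∀ a, U.map (φ a) ≤ U.map (φ l)) : ∃ x ∈ U, x ≠ 0 ∧ IsPure φ x := by
  choose B hB using fun a => exists_end_apply_eq_of_map_le hl (h a)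
  have hBB : ∀ a b (x : U), φ l (φ l (B a (B b x))) = φ a (φ b x) := fun a b x => by
    rw [hB, hφ, hB]
  have hcomm : ∀ a b, Commute (B a) (B b) := fun a b => LinearMap.ext fun x => Subtype.ext <|
    disjoint_ker_iff_injOn.1 hl (B a (B b x)).2 (B b (B a x)).2 <|
      disjoint_ker_iff_injOn.1 hl' (Submodule.mem_map_of_mem (B a (B b x)).2)
        (Submodule.mem_map_of_mem (B b (B a x)).2)
          ((hBB a b x).trans ((hφ a b x).trans (hBB b a x).symm))
  have : Nontrivial U := Submodule.nontrivial_iff_ne_bot.2 hU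
  obtain ⟨x, hx0, hx⟩ := exists_common_eigenvector B hcomm
  refine ⟨x, x.2, fun h0 => hx0 (Subtype.ext h0), l, fun a => (hx a).imp fun c hc => ?_⟩
  rw [← hB, hc, Submodule.coe_smul, map_smul]

/-- A commuting linear family of operators that lower the degree of a sequence of subspaces by
one, no nonzero vector of positive degree being killed by the whole family.  It abstracts the
contraction of homogeneous functionals on a polynomial ring by linear forms. -/
structure IsContractionSystem (φ : L →ₗ[K] Module.End K D) (𝒟 : ℕ → Submodule K D) : Prop where
  apply_comm : ∀ a b x, φ a (φ b x) = φ b (φ a x)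
  map_le : ∀ n a, (𝒟 (n + 1)).map (φ a) ≤ 𝒟 n
  eq_zero_of_forall_apply : ∀ n, ∀ x ∈ 𝒟 (n + 1), (∀ a, φ a x = 0) → x = 0

/-- If `m` is injective on `U.map (φ l)`, then `U ⊓ ker (φ m) ≤ U ⊓ ker (φ l)`, with equality by
minimality; this applies to `m = l₁` and to `m = l₁ + t • a` for almost all `t`. -/
theorem apply_eq_zero_of_finrank_inf_ker_minimal [Infinite K]
    (hφ : ∀ a b x, φ a (φ b x) = φ b (φ a x)) {U : Submodule K D} [FiniteDimensional K U]
    {l l₁ : L} (hmin : ∀ m, finrank K ↥(U ⊓ ker (φ l)) ≤ finrank K ↥(U ⊓ ker (φ m)))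
    (hl₁ : Disjoint (U.map (φ l)) (ker (φ l₁))) {x : D} (hx : x ∈ U ⊓ ker (φ l)) (a : L) :
    φ a x = 0 := by
  have hker : ∀ m, Disjoint (U.map (φ l)) (ker (φ m)) → φ m x = 0 := by
    intro m hm
    have hle : U ⊓ ker (φ m) ≤ U ⊓ ker (φ l) := by
      rintro y ⟨hyU, hym⟩
      refine ⟨hyU, disjoint_ker.1 hm _ (Submodule.mem_map_of_mem hyU) ?_⟩
      rw [hφ, mem_ker.1 hym, map_zero]
    rw [← Submodule.eq_of_le_of_finrank_le hle (hmin m)] at hx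
    exact hx.2
  obtain ⟨t, ht⟩ := ((finite_setOf_not_disjoint_ker_add_smul (φ a) hl₁).union
    (Set.finite_singleton 0)).exists_notMem
  simp only [Set.mem_union, Set.mem_ofPred_eq, Set.mem_singleton_iff, not_or, not_not] at ht
  obtain ⟨ht, ht0⟩ := ht
  have hxt : φ (l₁ + t • a) x = 0 := hker _ (by rwa [map_add, map_smul])
  simpa [hker l₁ hl₁, ht0] using hxt

/-- If `φ b w = φ l w₁ + c • φ m w`, then `φ (b - c • m)` maps both `φ m w` and `W.map (φ l)`, hence
all of `V`, into `V.map (φ l)`; so it has an eigenvalue relative to `φ l`. -/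
theorem exists_not_disjoint_ker_sub_smul_sub_smul [IsAlgClosed K]
    (hφ : ∀ a b x, φ a (φ b x) = φ b (φ a x)) {V W : Submodule K D}
    [FiniteDimensional K V] [FiniteDimensional K W]
    (hWV : ∀ a, W.map (φ a) ≤ V) (hdim : finrank K V = finrank K W + 1) {l m : L}
    (hlW : Disjoint W (ker (φ l))) (hlV : Disjoint V (ker (φ l)))
    (hm : ¬ W.map (φ m) ≤ W.map (φ l)) (b : L) :
    ∃ c d : K, ¬ Disjoint V (ker (φ (b - c • m - d • l))) := by
  obtain ⟨_, ⟨w, hw, rfl⟩, hwl⟩ := SetLike.not_le_iff_exists.1 hm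
  have hWV' : ∀ a, ∀ x ∈ W, φ a x ∈ V := fun a x hx => hWV a (Submodule.mem_map_of_mem hx)
  have hVeq : W.map (φ l) ⊔ K ∙ φ m w = V := by
    have hfin : finrank K (W.map (φ l)) = finrank K W := finrank_map_of_disjoint_ker hlW
    exact sup_span_singleton_eq_of_finrank_eq_succ (hWV l) (hfin ▸ hdim) (hWV' m w hw) hwl
  obtain ⟨_, ⟨w₁, hw₁, rfl⟩, _, hc, hbw⟩ := Submodule.mem_sup.1 (hVeq ▸ hWV' b w hw)
  obtain ⟨c, rfl⟩ := Submodule.mem_span_singleton.1 hc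
  have hcw : φ (b - c • m) w = φ l w₁ := by
    rw [map_sub, map_smul, LinearMap.sub_apply, LinearMap.smul_apply, ← hbw, add_sub_cancel_right]
  have hle : V.map (φ (b - c • m)) ≤ V.map (φ l) := by
    conv_lhs => rw [← hVeq]
    rw [Submodule.map_sup, Submodule.map_span, Set.image_singleton, sup_le_iff,
      Submodule.span_singleton_le_iff_mem]
    refine ⟨map_map_le_map hφ hWV l _, φ m w₁, hWV' m w₁ hw₁, ?_⟩
    rw [hφ l, ← hcw, hφ m]
  have hV0 : V ≠ ⊥ := (Submodule.one_le_finrank_iff).1 (by lia)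
  obtain ⟨d, hd⟩ := exists_not_disjoint_ker_sub_smul hV0 hlV hle
  exact ⟨c, d, by rwa [map_sub, map_smul]⟩

namespace IsContractionSystem

variable {𝒟 : ℕ → Submodule K D} {n : ℕ} {V W : Submodule K D}

theorem exists_disjoint_ker [Infinite K] (h𝒟 : IsContractionSystem φ 𝒟) :
    ∀ {n : ℕ} {U : Submodule K D} [FiniteDimensional K U], U ≤ 𝒟 n → finrank K U ≤ n →
      ∃ l, Disjoint U (ker (φ l)) := by
  intro n
  induction n with
  | zero =>
    intro U _ _ hU
    rw [Submodule.finrank_eq_zero.1 (Nat.le_zero.1 hU)]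
    exact ⟨0, disjoint_bot_left⟩
  | succ n ih =>
    intro U _ hU𝒟 hU
    obtain ⟨l, hmin⟩ : ∃ l, ∀ m, finrank K ↥(U ⊓ ker (φ l)) ≤ finrank K ↥(U ⊓ ker (φ m)) :=
      ⟨_, fun m => Function.argmin_le (fun m => finrank K ↥(U ⊓ ker (φ m))) m⟩
    refine ⟨l, ?_⟩
    by_contra hl
    have hmap : finrank K (U.map (φ l)) ≤ n := by
      by_contra! hlt
      exact hl (Submodule.disjoint_ker_of_finrank_le _ (hU.trans hlt))
    obtain ⟨l₁, hl₁⟩ := ih ((Submodule.map_mono hU𝒟).trans (h𝒟.map_le n l)) hmap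
    refine hl (disjoint_ker.2 fun x hxU hxl => ?_)
    exact h𝒟.eq_zero_of_forall_apply n x (hU𝒟 hxU) <|
      apply_eq_zero_of_finrank_inf_ker_minimal h𝒟.apply_comm hmin hl₁ ⟨hxU, hxl⟩

theorem finrank_map_lt_finrank_map [IsAlgClosed K] (h𝒟 : IsContractionSystem φ 𝒟)
    [FiniteDimensional K V] [FiniteDimensional K W] (hV : V ≤ 𝒟 (n + 1))
    (hWV : ∀ a, W.map (φ a) ≤ V) (hVn : finrank K V ≤ n + 1)
    (hdim : finrank K V = finrank K W + 1) (hpure : ∀ x ∈ V, IsPure φ x → x = 0) {a : L}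
    (ha : W.map (φ a) ≠ ⊥) : finrank K (W.map (φ a)) < finrank K (V.map (φ a)) := by
  by_contra! hle
  have haW : finrank K (W.map (φ a)) ≤ finrank K W := Submodule.finrank_map_le _ _
  obtain ⟨l, hlV, hlaV⟩ := exists_disjoint_ker_and_disjoint_ker φ
    (h𝒟.exists_disjoint_ker hV hVn)
    (h𝒟.exists_disjoint_ker ((Submodule.map_mono hV).trans (h𝒟.map_le n a)) (by lia))
  have hlaW : Disjoint (W.map (φ a)) (ker (φ l)) := hlV.mono_left (hWV a)
  have heq : (W.map (φ a)).map (φ l) = V.map (φ a) :=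
    Submodule.eq_of_le_of_finrank_le (map_map_le_map h𝒟.apply_comm hWV a l)
      (by rwa [finrank_map_of_disjoint_ker hlaW])
  obtain ⟨x, hx, hx0, hxp⟩ := exists_isPure_of_map_le h𝒟.apply_comm ha hlaW (heq ▸ hlaV)
    fun b => heq ▸ map_map_le_map h𝒟.apply_comm hWV a b
  exact hx0 (hpure x (hWV a hx) hxp)

theorem finrank_map_le_finrank_map [IsAlgClosed K] (h𝒟 : IsContractionSystem φ 𝒟)
    [FiniteDimensional K V] [FiniteDimensional K W] (hV : V ≤ 𝒟 (n + 1)) (hW : W ≤ 𝒟 (n + 2))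
    (hWV : ∀ a, W.map (φ a) ≤ V) (hVn : finrank K V ≤ n + 1)
    (hdim : finrank K V = finrank K W + 1) (hpure : ∀ x ∈ V, IsPure φ x → x = 0) {a : L}
    (ha : ¬ Disjoint W (ker (φ a))) : finrank K (V.map (φ a)) ≤ finrank K (W.map (φ a)) := by
  by_contra! hlt
  have hrankV := finrank_map_add_finrank_inf_ker (φ a) V
  have hrankW := finrank_map_add_finrank_inf_ker (φ a) W
  obtain ⟨l, hlV, hlW⟩ := exists_disjoint_ker_and_disjoint_ker φ
    (h𝒟.exists_disjoint_ker hV hVn) (h𝒟.exists_disjoint_ker hW (by lia))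
  have hlE : Disjoint (W ⊓ ker (φ a)) (ker (φ l)) := hlW.mono_left inf_le_left
  have heq : (W ⊓ ker (φ a)).map (φ l) = V ⊓ ker (φ a) :=
    Submodule.eq_of_le_of_finrank_le (map_inf_ker_le_inf_ker h𝒟.apply_comm hWV a l)
      (by rw [finrank_map_of_disjoint_ker hlE]; lia)
  obtain ⟨x, hx, hx0, hxp⟩ := exists_isPure_of_map_le h𝒟.apply_comm
    (fun h => ha (disjoint_iff.2 h)) hlE (heq ▸ hlV.mono_left inf_le_left)
    fun b => heq ▸ map_inf_ker_le_inf_ker h𝒟.apply_comm hWV a b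
  have hlx : φ l x = 0 :=
    hpure _ (hWV l (Submodule.mem_map_of_mem hx.1)) (hxp.apply h𝒟.apply_comm l)
  exact hx0 (disjoint_ker.1 hlW x hx.1 hlx)

theorem disjoint_ker_of_notMem_linearAnnihilator [IsAlgClosed K]
    (h𝒟 : IsContractionSystem φ 𝒟) [FiniteDimensional K V] [FiniteDimensional K W]
    (hV : V ≤ 𝒟 (n + 1)) (hW : W ≤ 𝒟 (n + 2)) (hW0 : W ≠ ⊥) (hWV : ∀ a, W.map (φ a) ≤ V)
    (hVn : finrank K V ≤ n + 1) (hdim : finrank K V = finrank K W + 1)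
    (hpure : ∀ x ∈ V, IsPure φ x → x = 0) {a : L} (ha : a ∉ linearAnnihilator φ V) :
    Disjoint W (ker (φ a)) ∧ Disjoint V (ker (φ a)) := by
  have hlt : W.map (φ a) ≠ ⊥ → finrank K (W.map (φ a)) < finrank K (V.map (φ a)) :=
    h𝒟.finrank_map_lt_finrank_map hV hWV hVn hdim hpure
  have haW : Disjoint W (ker (φ a)) := by
    by_contra haW
    have hle := h𝒟.finrank_map_le_finrank_map hV hW hWV hVn hdim hpure haW
    have haW0 : W.map (φ a) = ⊥ := of_not_not fun h => (hlt h).not_ge hle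
    rw [haW0, finrank_bot, Nat.le_zero, Submodule.finrank_eq_zero,
      ← le_ker_iff_map] at hle
    exact ha (mem_linearAnnihilator.2 hle)
  refine ⟨haW, Submodule.disjoint_ker_of_finrank_le (φ a) ?_⟩
  have hltW := hlt fun h => hW0 (haW.eq_bot_of_le (le_ker_iff_map.2 h))
  rw [finrank_map_of_disjoint_ker haW] at hltW
  lia

theorem finrank_quotient_linearAnnihilator [IsAlgClosed K] (h𝒟 : IsContractionSystem φ 𝒟)
    [FiniteDimensional K V] [FiniteDimensional K W] (hV : V ≤ 𝒟 (n + 1)) (hW : W ≤ 𝒟 (n + 2))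
    (hW0 : W ≠ ⊥) (hWV : ∀ a, W.map (φ a) ≤ V) (hVn : finrank K V ≤ n + 1)
    (hdim : finrank K V = finrank K W + 1) (hpure : ∀ x ∈ V, IsPure φ x → x = 0) :
    finrank K (L ⧸ linearAnnihilator φ V) = 2 := by
  have hinj := fun a (ha : a ∉ linearAnnihilator φ V) =>
    h𝒟.disjoint_ker_of_notMem_linearAnnihilator hV hW hW0 hWV hVn hdim hpure ha
  have hV0 : V ≠ ⊥ := (Submodule.one_le_finrank_iff).1 (by lia)
  obtain ⟨v, hv, hv0⟩ := Submodule.exists_mem_ne_zero_of_ne_bot hV0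
  obtain ⟨l, hlV⟩ := h𝒟.exists_disjoint_ker hV hVn
  have hl : l ∉ linearAnnihilator φ V := fun h =>
    hv0 (disjoint_ker.1 hlV v hv (mem_linearAnnihilator.1 h v hv))
  obtain ⟨m, hm⟩ : ∃ m, ∀ c : K, m - c • l ∉ linearAnnihilator φ V := by
    by_contra! h
    refine hv0 (hpure v hv ⟨l, fun a => (h a).imp fun c hc => sub_eq_zero.1 ?_⟩)
    simpa using mem_linearAnnihilator.1 hc v hv
  have hml : ¬ W.map (φ m) ≤ W.map (φ l) := fun h => by
    obtain ⟨c, hc⟩ := exists_not_disjoint_ker_sub_smul hW0 (hinj l hl).1 h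
    exact hc (by simpa using (hinj _ (hm c)).1)
  refine finrank_quotient_eq_two hl hm fun b => ?_
  obtain ⟨c, d, hcd⟩ := exists_not_disjoint_ker_sub_smul_sub_smul h𝒟.apply_comm hWV hdim
    (hinj l hl).1 hlV hml b
  exact ⟨c, d, of_not_not fun h => hcd (hinj _ h).2⟩

end IsContractionSystem

end LinearFamilies

section HomogeneousPolynomials

variable {R σ : Type*} [CommSemiring R]

theorem range_homogeneousComponent (n : ℕ) :
    range (homogeneousComponent n : MvPolynomial σ R →ₗ[R] _) = homogeneousSubmodule σ R n :=
  le_antisymm (by rintro _ ⟨p, rfl⟩; exact homogeneousComponent_mem n p)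
    fun p hp => ⟨p, homogeneousComponent_eq_self hp⟩

theorem homogeneousComponent_add_mul {m : ℕ} {a : MvPolynomial σ R} (ha : a.IsHomogeneous m)
    (n : ℕ) (p : MvPolynomial σ R) :
    homogeneousComponent (m + n) (a * p) = a * homogeneousComponent n p := by
  let : GradedAlgebra (homogeneousSubmodule σ R) := MvPolynomial.gradedAlgebra
  have h := DirectSum.coe_decompose_mul_add_of_left_mem (homogeneousSubmodule σ R) (j := n)
    (b := p) ((mem_homogeneousSubmodule m a).2 ha)
  exact (decomposition.decompose'_apply _ _).symm.trans
    (h.trans (congrArg (a * ·) (decomposition.decompose'_apply p n)))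

theorem aeval_smul_const_of_isHomogeneous {A : Type*} [CommSemiring A] [Algebra R A] {n : ℕ}
    {f : MvPolynomial σ R} (hf : f.IsHomogeneous n) (p : σ → R) (l : A) :
    aeval (fun i => p i • l) f = eval p f • l ^ n := by
  rw [aeval_def, eval₂_eq, eval_eq, Finset.sum_smul]
  refine Finset.sum_congr rfl fun d hd => ?_
  have hdeg : ∑ i ∈ d.support, d i = n := by
    rw [← Finsupp.degree_apply, Finsupp.degree_eq_weight_one]
    exact hf (mem_support_iff.1 hd)
  rw [← Algebra.smul_def, mul_smul]
  simp only [smul_pow, Finset.prod_smul, Finset.prod_pow_eq_pow_sum, hdeg]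

theorem apply_mul_eq_apply_aeval_mul {M : Type*} [AddCommMonoid M] [Module R M]
    {v : MvPolynomial σ R →ₗ[R] M} {q : σ → MvPolynomial σ R}
    (h : ∀ i g, v (X i * g) = v (q i * g)) (f g : MvPolynomial σ R) :
    v (f * g) = v (aeval q f * g) := by
  induction f using MvPolynomial.induction_on generalizing g with
  | C c => rw [algHom_C, algebraMap_eq]
  | add f₁ f₂ h₁ h₂ => rw [map_add, add_mul, add_mul, map_add, map_add, h₁, h₂]
  | mul_X f i ih =>
    rw [map_mul (aeval q), aeval_X, mul_assoc, ih, mul_left_comm, h, mul_left_comm, mul_assoc]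

theorem mul_mem_of_forall_isHomogeneous_mul_mem {J : Ideal (MvPolynomial σ R)} {n : ℕ}
    {a : MvPolynomial σ R} (ha : ∀ h : MvPolynomial σ R, h.IsHomogeneous n → a * h ∈ J)
    {h : MvPolynomial σ R} (hh : h.IsHomogeneous (n + 1)) : a * h ∈ J := by
  rw [← mem_homogeneousSubmodule, ← homogeneousSubmodule_one_pow, pow_succ,
    homogeneousSubmodule_one_pow] at hh
  induction hh using Submodule.mul_induction_on' with
  | mem_mul_mem f hf g _ =>
    rw [← mul_assoc]
    exact J.mul_mem_right g (ha f hf)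
  | add f _ g _ hf hg =>
    rw [mul_add]
    exact J.add_mem hf hg

theorem finrank_homogeneousSubmodule_one (K σ : Type*) [Field K] [Fintype σ] :
    finrank K (homogeneousSubmodule σ K 1) = Fintype.card σ := by
  rw [homogeneousSubmodule_one_eq_span_X, finrank_span_eq_card (linearIndependent_X σ K)]

theorem finiteDimensional_homogeneousSubmodule_one (K σ : Type*) [Field K] [Finite σ] :
    FiniteDimensional K (homogeneousSubmodule σ K 1) := by
  rw [homogeneousSubmodule_one_eq_span_X]
  exact FiniteDimensional.span_of_finite K (Set.finite_range X)

end HomogeneousPolynomials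

section InverseSystem

variable {K σ : Type*} [Field K]

/-- The degree-`n` part of Macaulay's inverse system of `J`, encoded as the functionals on the whole
polynomial ring that factor through the homogeneous component of degree `n` and vanish on the forms
of degree `n` in `J`. -/
noncomputable def inverseSystem (J : Ideal (MvPolynomial σ K)) (n : ℕ) :
    Submodule K (Dual K (MvPolynomial σ K)) :=
  ((J.restrictScalars K).comap (homogeneousComponent n)).dualAnnihilator

/-- The contraction action of linear forms on functionals, `(a • v) p = v (a * p)`. -/
noncomputable def contraction (K σ : Type*) [Field K] :
    homogeneousSubmodule σ K 1 →ₗ[K] Module.End K (Dual K (MvPolynomial σ K)) :=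
  (Module.Dual.transpose ∘ₗ LinearMap.mul K (MvPolynomial σ K)).domRestrict _

theorem contraction_apply (a : homogeneousSubmodule σ K 1) (v : Dual K (MvPolynomial σ K))
    (p : MvPolynomial σ K) : contraction K σ a v p = v (a * p) := rfl

theorem contraction_comm (a b : homogeneousSubmodule σ K 1) (v : Dual K (MvPolynomial σ K)) :
    contraction K σ a (contraction K σ b v) = contraction K σ b (contraction K σ a v) :=
  LinearMap.ext fun p => by simp only [contraction_apply, mul_left_comm]

theorem mem_inverseSystem {J : Ideal (MvPolynomial σ K)} {n : ℕ} {v : Dual K (MvPolynomial σ K)} :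
    v ∈ inverseSystem J n ↔ ∀ p, homogeneousComponent n p ∈ J → v p = 0 :=
  Submodule.mem_dualAnnihilator v

theorem inverseSystem_anti {I J : Ideal (MvPolynomial σ K)} (h : I ≤ J) (n : ℕ) :
    inverseSystem J n ≤ inverseSystem I n :=
  Submodule.dualAnnihilator_anti fun _ hp => h hp

theorem finrank_inverseSystem (J : Ideal (MvPolynomial σ K)) (n : ℕ) :
    finrank K (inverseSystem J n) = hilb J n := by
  let π := (Ideal.Quotient.mkₐ K J).toLinearMap ∘ₗ homogeneousComponent n
  have hker : (J.restrictScalars K).comap (homogeneousComponent n) = ker π := by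
    ext p
    exact Ideal.Quotient.eq_zero_iff_mem.symm
  rw [inverseSystem, hker, ← (Submodule.dualQuotEquivDualAnnihilator _).finrank_eq,
    Subspace.dual_finrank_eq, π.quotKerEquivRange.finrank_eq, range_comp,
    range_homogeneousComponent, hilb]

theorem mem_iff_forall_mem_inverseSystem {J : Ideal (MvPolynomial σ K)} {n : ℕ}
    {f : MvPolynomial σ K} (hf : f.IsHomogeneous n) :
    f ∈ J ↔ ∀ v ∈ inverseSystem J n, v f = 0 := by
  rw [inverseSystem, Subspace.forall_mem_dualAnnihilator_apply_eq_zero_iff, Submodule.mem_comap,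
    homogeneousComponent_eq_self hf, Submodule.restrictScalars_mem]

theorem map_contraction_inverseSystem_le (J : Ideal (MvPolynomial σ K)) (n : ℕ)
    (a : homogeneousSubmodule σ K 1) :
    (inverseSystem J (n + 1)).map (contraction K σ a) ≤ inverseSystem J n := by
  rintro _ ⟨v, hv, rfl⟩
  refine mem_inverseSystem.2 fun p hp => ?_
  rw [contraction_apply]
  refine mem_inverseSystem.1 hv _ ?_
  rw [add_comm n 1, homogeneousComponent_add_mul a.2]
  exact J.mul_mem_left _ hp

theorem eq_zero_of_forall_contraction_eq_zero {n : ℕ} {v : Dual K (MvPolynomial σ K)}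
    (hv : v ∈ inverseSystem ⊥ (n + 1)) (h : ∀ a, contraction K σ a v = 0) : v = 0 := by
  refine LinearMap.ext fun p => ?_
  induction p using MvPolynomial.induction_on with
  | C c =>
    refine mem_inverseSystem.1 hv _ ?_
    rw [homogeneousComponent_eq_zero _ _ (by simp), Ideal.mem_bot]
  | add p q hp hq => rw [map_add, hp, hq, map_add]
  | mul_X p i _ =>
    rw [mul_comm]
    exact LinearMap.congr_fun (h ⟨X i, isHomogeneous_X K i⟩) p

theorem isContractionSystem_inverseSystem_bot (K σ : Type*) [Field K] :
    IsContractionSystem (contraction K σ) (inverseSystem ⊥) where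
  apply_comm := contraction_comm
  map_le := map_contraction_inverseSystem_le ⊥
  eq_zero_of_forall_apply _ _ := eq_zero_of_forall_contraction_eq_zero

theorem eq_zero_of_forall_isHomogeneous {J : Ideal (MvPolynomial σ K)} {n : ℕ}
    {v : Dual K (MvPolynomial σ K)} (hv : v ∈ inverseSystem J n)
    (h : ∀ f : MvPolynomial σ K, f.IsHomogeneous n → v f = 0) : v = 0 := by
  refine LinearMap.ext fun f => ?_
  have hsub : v (f - homogeneousComponent n f) = 0 := by
    refine mem_inverseSystem.1 hv _ ?_
    rw [map_sub, homogeneousComponent_eq_self (homogeneousComponent_isHomogeneous n f), sub_self]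
    exact J.zero_mem
  rw [← sub_add_cancel f (homogeneousComponent n f), map_add, hsub, zero_add,
    h _ (homogeneousComponent_isHomogeneous n f), LinearMap.zero_apply]

theorem eq_zero_of_isPure_of_mem_inverseSystem {J : Ideal (MvPolynomial σ K)} {n : ℕ}
    (hbpf : ∀ p : σ → K, p ≠ 0 → ∃ f ∈ J, f.IsHomogeneous (n + 1) ∧ eval p f ≠ 0)
    {v : Dual K (MvPolynomial σ K)} (hv : v ∈ inverseSystem J (n + 1))
    (hpure : IsPure (contraction K σ) v) : v = 0 := by
  obtain ⟨l, hl⟩ := hpure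
  choose c hc using hl
  let p : σ → K := fun i => c ⟨X i, isHomogeneous_X K i⟩
  have hX : ∀ i g, v (X i * g) = v ((p i • (l : MvPolynomial σ K)) * g) := fun i g => by
    rw [smul_mul_assoc, map_smul]
    exact LinearMap.congr_fun (hc ⟨X i, isHomogeneous_X K i⟩) g
  have hform : ∀ f : MvPolynomial σ K, f.IsHomogeneous (n + 1) →
      v f = eval p f * v ((l : MvPolynomial σ K) ^ (n + 1)) := fun f hf => by
    rw [← mul_one f, apply_mul_eq_apply_aeval_mul hX, aeval_smul_const_of_isHomogeneous hf,
      mul_one, mul_one, map_smul, smul_eq_mul]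
  refine eq_zero_of_forall_isHomogeneous hv fun f hf => ?_
  rw [hform f hf]
  by_cases hp : p = 0
  · have hconst : constantCoeff f = 0 := hf.coeff_eq_zero (d := 0) (by simp)
    rw [hp, eval_zero, hconst, zero_mul]
  · obtain ⟨g, hgJ, hg, hgp⟩ := hbpf p hp
    have hvg := (mem_iff_forall_mem_inverseSystem hg).1 hgJ v hv
    rw [hform g hg] at hvg
    rw [(mul_eq_zero.1 hvg).resolve_left hgp, mul_zero]

theorem mem_linearAnnihilator_inverseSystem {J : Ideal (MvPolynomial σ K)} {n : ℕ}
    {a : homogeneousSubmodule σ K 1} :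
    a ∈ linearAnnihilator (contraction K σ) (inverseSystem J (n + 1)) ↔
      ∀ h : MvPolynomial σ K, h.IsHomogeneous n → (a : MvPolynomial σ K) * h ∈ J := by
  rw [mem_linearAnnihilator]
  constructor
  · intro ha h hh
    refine (mem_iff_forall_mem_inverseSystem (IsHomogeneous.mul a.2 hh)).2 fun v hv => ?_
    rw [add_comm 1 n] at hv
    exact LinearMap.congr_fun (ha v hv) h
  · intro ha v hv
    refine LinearMap.ext fun p => ?_
    rw [contraction_apply]
    refine mem_inverseSystem.1 hv _ ?_
    rw [add_comm n 1, homogeneousComponent_add_mul a.2]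
    exact ha _ (homogeneousComponent_isHomogeneous n p)

theorem finrank_quotient_linearAnnihilator_inverseSystem [IsAlgClosed K]
    {J : Ideal (MvPolynomial σ K)} {n k : ℕ} (hk : 2 ≤ k) (hkn : k ≤ n + 1)
    (hn : hilb J (n + 1) = k) (hn1 : hilb J (n + 2) + 1 = k)
    (hbpf : ∀ p : σ → K, p ≠ 0 → ∃ f ∈ J, f.IsHomogeneous (n + 1) ∧ eval p f ≠ 0) :
    finrank K (homogeneousSubmodule σ K 1 ⧸
      linearAnnihilator (contraction K σ) (inverseSystem J (n + 1))) = 2 := by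
  rw [← finrank_inverseSystem] at hn hn1
  have : FiniteDimensional K (inverseSystem J (n + 1)) := .of_finrank_pos (by lia)
  have : FiniteDimensional K (inverseSystem J (n + 2)) := .of_finrank_pos (by lia)
  exact (isContractionSystem_inverseSystem_bot K σ).finrank_quotient_linearAnnihilator
    (inverseSystem_anti bot_le _) (inverseSystem_anti bot_le _)
    (Submodule.one_le_finrank_iff.1 (by lia)) (map_contraction_inverseSystem_le J (n + 1))
    (hn.trans_le hkn) (hn.trans hn1.symm)
    fun _ hv hvp => eq_zero_of_isPure_of_mem_inverseSystem hbpf hv hvp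

end InverseSystem

theorem annihilating_linear_forms_subspace_general
    {K : Type*} [Field K] [IsAlgClosed K] {σ : Type*} [Fintype σ] {n k : ℕ}
    (J : Ideal (MvPolynomial σ K)) (hk : 2 ≤ k) (hkn : k ≤ n)
    (hn : hilb J n = k) (hn1 : hilb J (n + 1) + 1 = k)
    (hbpf : ∀ v : σ → K, v ≠ 0 → ∃ f ∈ J, f.IsHomogeneous n ∧ eval v f ≠ 0) :
    ∃ W : Submodule K (MvPolynomial σ K),
      (W : Set (MvPolynomial σ K)) =
        {ℓ : MvPolynomial σ K | ℓ.IsHomogeneous 1 ∧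
          ∀ h : MvPolynomial σ K, h.IsHomogeneous (n - 1) → ℓ * h ∈ J} ∧
      finrank K W + 2 = Fintype.card σ ∧
      (∀ ℓ ∈ W, ∀ h : MvPolynomial σ K, h.IsHomogeneous n → ℓ * h ∈ J) ∧
      (Fintype.card σ = 3 → ∀ ℓ₁ ℓ₂ : MvPolynomial σ K, ℓ₁ ∈ W → ℓ₂ ∈ W → ℓ₁ ≠ 0 →
        ∃ c : K, ℓ₂ = c • ℓ₁) := by
  obtain ⟨n, rfl⟩ : ∃ m, n = m + 1 := Nat.exists_eq_succ_of_ne_zero (by lia)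
  let Z := linearAnnihilator (contraction K σ) (inverseSystem J (n + 1))
  let W := Z.map (homogeneousSubmodule σ K 1).subtype
  have hW : ∀ ℓ, ℓ ∈ W ↔
      ℓ.IsHomogeneous 1 ∧ ∀ h : MvPolynomial σ K, h.IsHomogeneous n → ℓ * h ∈ J := fun ℓ =>
    ⟨by rintro ⟨a, ha, rfl⟩; exact ⟨a.2, mem_linearAnnihilator_inverseSystem.1 ha⟩,
      fun ⟨hℓ, hℓJ⟩ => ⟨⟨ℓ, hℓ⟩, mem_linearAnnihilator_inverseSystem.2 hℓJ, rfl⟩⟩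
  have hdim : finrank K W + 2 = Fintype.card σ := by
    have := finiteDimensional_homogeneousSubmodule_one K σ
    rw [← finrank_homogeneousSubmodule_one K σ, ← Z.finrank_quotient_add_finrank,
      finrank_quotient_linearAnnihilator_inverseSystem hk hkn hn hn1 hbpf,
      Submodule.finrank_map_subtype_eq, add_comm]
  exact ⟨W, Set.ext hW, hdim,
    fun ℓ hℓ h => mul_mem_of_forall_isHomogeneous_mul_mem ((hW ℓ).1 hℓ).2,
    fun hσ ℓ₁ ℓ₂ h₁ h₂ h₀ => exists_eq_smul_of_finrank_eq_one (by lia) h₁ h₀ h₂⟩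

/-- **Lemma (the annihilating linear forms form a codimension-2 space).**
Let `K` be algebraically closed, `S = K[x_1,…,x_r]` with `r ≥ 3`, and `J ⊆ S` a homogeneous
artinian ideal with `dim [S/J]_n = k`, `dim [S/J]_{n+1} = k-1` (`2 ≤ k ≤ n`), `[S/J]_t = 0` for
`t ≥ n+2`, no minimal generator of `J` in degree `n+1`, and such that the forms in `[J]_n` have
no common zero in `ℙ^{r-1}`.  Then the set of linear forms `ℓ` with `ℓ·[S]_{n-1} ⊆ J` (together
with `0`) is a `K`-vector subspace of `[S]_1` of dimension exactly `r-2`; in particular there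
are `r-2` linearly independent linear forms annihilating both `[S/J]_{n-1}` and `[S/J]_n`, and
when `r = 3` such a linear form is unique up to scalar multiplication. -/
theorem annihilating_linear_forms_subspace
    {K : Type*} [Field K] [IsAlgClosed K] {r n k : ℕ} (hr : 3 ≤ r)
    (J : Ideal (MvPolynomial (Fin r) K))
    (hJhom : ∀ f ∈ J, ∀ t : ℕ, homogeneousComponent t f ∈ J)
    (hk : 2 ≤ k) (hkn : k ≤ n)
    (hn : hilb J n = k) (hn1 : hilb J (n + 1) + 1 = k)
    (htail : ∀ t, n + 2 ≤ t → hilb J t = 0)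
    (hnomingen : ∀ f ∈ J, f.IsHomogeneous (n + 1) → f ∈ compIdeal J n)
    (hbpf : ∀ v : Fin r → K, v ≠ 0 → ∃ f ∈ J, f.IsHomogeneous n ∧ eval v f ≠ 0) :
    ∃ W : Submodule K (MvPolynomial (Fin r) K),
      (W : Set (MvPolynomial (Fin r) K)) =
        {ℓ : MvPolynomial (Fin r) K | ℓ.IsHomogeneous 1 ∧
          ∀ h : MvPolynomial (Fin r) K, h.IsHomogeneous (n - 1) → ℓ * h ∈ J} ∧
      Module.finrank K W = r - 2 ∧
      (∀ ℓ ∈ W, ∀ h : MvPolynomial (Fin r) K, h.IsHomogeneous n → ℓ * h ∈ J) ∧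
      (r = 3 → ∀ ℓ₁ ℓ₂ : MvPolynomial (Fin r) K, ℓ₁ ∈ W → ℓ₂ ∈ W → ℓ₁ ≠ 0 →
        ∃ c : K, ℓ₂ = c • ℓ₁) := by
  obtain ⟨W, hW, hdim, hW'⟩ := annihilating_linear_forms_subspace_general J hk hkn hn hn1 hbpf
  exact ⟨W, hW, by simpa using Nat.eq_sub_of_add_eq hdim, by simpa using hW'⟩
end

section
/- Let M be a finitely generated graded module over R = K[x_0,…,x_r] with initial degree 0, and suppose M has no minimal generator in degree 1, i.e. M_1 = R_1·M_0, and dim_K M_1 > 2·dim_K M_0. Let L, L′ ∈ [R]_1 and suppose ℓ̄_1,…,ℓ̄_{r−2}, ℓ̄′_1,…,ℓ̄′_{r−2} ∈ [R]_1 are such that the image of ×ℓ̄_i : M_0 → M_1 is contained in the image of ×L : M_0 → M_1 for each i, and the image of ×ℓ̄′_i : M_0 → M_1 is contained in the image of ×L′ : M_0 → M_1 for each i. Then the 2r−2 linear forms L, L′, ℓ̄_1,…,ℓ̄_{r−2}, ℓ̄′_1,…,ℓ̄′_{r−2} do not span [R]_1; that is, their span is a proper subspace of [R]_1 (so their common zero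 locus in ℙ^r is nonempty). -/
open MvPolynomial

/-!
If the forms spanned `[R]_1`, then `M_1 = R_1·M_0` would be contained in `L·M_0 + L'·M_0`, whose
dimension is at most `2·dim M_0`. This count needs `M_0` to be finite-dimensional: the projection
`M → M_0` is semilinear along `R → R/(x_0,…,x_r) = K`, so it carries generators of `M` to
generators of `M_0`.
-/

section SubmoduleSMul

variable {K A M : Type*} [CommSemiring K] [Semiring A] [Algebra K A] [AddCommMonoid M]
  [Module K M] [Module A M] [IsScalarTower K A M]

theorem smul_eq_map₂_lsmul (V : Submodule K A) (N : Submodule K M) :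
    V • N = Submodule.map₂ (Algebra.lsmul K K M).toLinearMap V N :=
  le_antisymm (Submodule.smul_le.2 fun _ ha _ hn => Submodule.apply_mem_map₂ _ ha hn)
    (Submodule.map₂_le.2 fun _ ha _ hn => Submodule.smul_mem_smul ha hn)

theorem span_smul_le_iff {s : Set A} {N P : Submodule K M} :
    Submodule.span K s • N ≤ P ↔ ∀ f ∈ s, ∀ m ∈ N, f • m ∈ P := by
  refine ⟨fun h f hf m hm => h (Submodule.smul_mem_smul (Submodule.subset_span hf) hm),
    fun h => Submodule.smul_le.2 fun f hf m hm => ?_⟩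
  have hs : Submodule.span K s ≤ P.comap ((Algebra.lsmul K K M).toLinearMap.flip m) :=
    Submodule.span_le.2 fun g hg => h g hg m hm
  exact hs hf

end SubmoduleSMul

section Dimension

open Module

theorem finrank_map₂_le {K P Q M : Type*} [CommSemiring K] [StrongRankCondition K]
    [AddCommMonoid P] [Module K P] [AddCommMonoid Q] [Module K Q] [AddCommMonoid M] [Module K M]
    (f : P →ₗ[K] Q →ₗ[K] M) (p : Submodule K P) (q : Submodule K Q)
    [Module.Free K p] [Module.Finite K p] [Module.Free K q] [Module.Finite K q] :
    finrank K (Submodule.map₂ f p q) ≤ finrank K p * finrank K q := by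
  rw [TensorProduct.map₂_eq_range_lift_comp_mapIncl, ← finrank_tensorProduct (R := K)]
  exact LinearMap.finrank_range_le _

theorem finrank_smul_le {K A M : Type*} [CommSemiring K] [StrongRankCondition K]
    [Semiring A] [Algebra K A] [AddCommMonoid M] [Module K M] [Module A M] [IsScalarTower K A M]
    (V : Submodule K A) (N : Submodule K M)
    [Module.Free K V] [Module.Finite K V] [Module.Free K N] [Module.Finite K N] :
    finrank K ↥(V • N) ≤ finrank K V * finrank K N := by
  rw [smul_eq_map₂_lsmul]
  exact finrank_map₂_le _ V N

theorem finrank_span_pair_le {K V : Type*} [Semiring K] [StrongRankCondition K]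
    [AddCommMonoid V] [Module K V] (v w : V) : finrank K (Submodule.span K {v, w}) ≤ 2 := by
  classical
  have h := finrank_span_finset_le_card (R := K) ({v, w} : Finset V)
  rw [Finset.coe_pair] at h
  exact h.trans Finset.card_le_two

theorem span_ne_of_finrank_mul_lt {K A M : Type*} [Field K] [Ring A] [Algebra K A]
    [AddCommGroup M] [Module K M] [Module A M] [IsScalarTower K A M]
    {V T : Submodule K A} {N₀ N₁ : Submodule K M}
    [FiniteDimensional K T] [FiniteDimensional K N₀] (hgen : N₁ ≤ V • N₀)
    (hdim : finrank K T * finrank K N₀ < finrank K N₁) {s : Set A}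
    (hs : ∀ f ∈ s, ∀ m ∈ N₀, f • m ∈ T • N₀) :
    Submodule.span K s ≠ V := by
  rintro rfl
  have : FiniteDimensional K ↥(T • N₀) := by
    rw [smul_eq_map₂_lsmul]
    exact .of_fg
      (.map₂ _ (Module.Finite.iff_fg.1 inferInstance) (Module.Finite.iff_fg.1 inferInstance))
  have hle : N₁ ≤ T • N₀ := hgen.trans (span_smul_le_iff.2 hs)
  exact hdim.not_ge ((Submodule.finrank_mono hle).trans (finrank_smul_le T N₀))

end Dimension

section DegreeZero

variable {K σ M : Type*} [CommSemiring K] [AddCommMonoid M]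
  [Module (MvPolynomial σ K) M] [Module K M] (𝓜 : ℕ → Submodule K M)
  [DirectSum.Decomposition 𝓜] [SetLike.GradedSMul (homogeneousSubmodule σ K) 𝓜]

theorem decompose_X_smul_zero (i : σ) (m : M) :
    DirectSum.decompose 𝓜 ((X i : MvPolynomial σ K) • m) 0 = 0 := by
  induction m using DirectSum.Decomposition.inductionOn 𝓜 with
  | zero => simp
  | @homogeneous t m =>
    have hX : (X i : MvPolynomial σ K) • (m : M) ∈ 𝓜 (1 + t) :=
      SetLike.GradedSMul.smul_mem ((mem_homogeneousSubmodule 1 _).2 (isHomogeneous_X K i)) m.2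
    exact Subtype.ext (DirectSum.decompose_of_mem_ne 𝓜 hX (by omega))
  | add m n hm hn => simp [hm, hn]

variable [IsScalarTower K (MvPolynomial σ K) M]

theorem decompose_smul_zero (f : MvPolynomial σ K) (m : M) :
    DirectSum.decompose 𝓜 (f • m) 0 = constantCoeff f • DirectSum.decompose 𝓜 m 0 := by
  induction f using MvPolynomial.induction_on generalizing m with
  | C a =>
    rw [← algebraMap_eq, algebraMap_smul, DirectSum.decompose_smul, algebraMap_eq,
      constantCoeff_C, DirectSum.smul_apply]
  | add f g hf hg => simp [add_smul, hf, hg]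
  | mul_X f i hf => simp [mul_smul, hf, decompose_X_smul_zero]

variable (σ)

/-- The projection of a graded module onto its component of degree `0`, as a map semilinear along
the augmentation `constantCoeff` of the polynomial ring. -/
def degreeZeroProj : M →ₛₗ[(constantCoeff : MvPolynomial σ K →+* K)] 𝓜 0 where
  toFun m := DirectSum.decompose 𝓜 m 0
  map_add' m n := by rw [DirectSum.decompose_add, DirectSum.add_apply]
  map_smul' := decompose_smul_zero 𝓜

theorem degreeZeroProj_surjective : Function.Surjective (degreeZeroProj σ 𝓜) := fun m =>
  ⟨m, Subtype.ext (DirectSum.decompose_of_mem_same 𝓜 m.2)⟩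

theorem finite_degreeZero [Module.Finite (MvPolynomial σ K) M] : Module.Finite K (𝓜 0) :=
  have : RingHomSurjective (constantCoeff : MvPolynomial σ K →+* K) :=
    ⟨fun a => ⟨C a, constantCoeff_C σ a⟩⟩
  Module.Finite.of_surjective (degreeZeroProj σ 𝓜) (degreeZeroProj_surjective σ 𝓜)

end DegreeZero

theorem gradedModule_linear_forms_do_not_span_general
    {K σ ι ι' M : Type*} [Field K] [AddCommGroup M] [Module (MvPolynomial σ K) M]
    [Module K M] [IsScalarTower K (MvPolynomial σ K) M] [Module.Finite (MvPolynomial σ K) M]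
    (𝓜 : ℕ → Submodule K M) (hdecomp : DirectSum.IsInternal 𝓜)
    (hgr : ∀ (f : MvPolynomial σ K) (d t : ℕ), f.IsHomogeneous d → ∀ m ∈ 𝓜 t, f • m ∈ 𝓜 (t + d))
    (hgen1 : ∀ m ∈ 𝓜 1, m ∈ Submodule.span K
      {x : M | ∃ f : MvPolynomial σ K, f.IsHomogeneous 1 ∧ ∃ m₀ ∈ 𝓜 0, x = f • m₀})
    (hdim : 2 * Module.finrank K (𝓜 0) < Module.finrank K (𝓜 1))
    (L L' : MvPolynomial σ K) (ℓ : ι → MvPolynomial σ K) (ℓ' : ι' → MvPolynomial σ K)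
    (himg : ∀ i, ∀ m ∈ 𝓜 0, ∃ m' ∈ 𝓜 0, ℓ i • m = L • m')
    (himg' : ∀ i, ∀ m ∈ 𝓜 0, ∃ m' ∈ 𝓜 0, ℓ' i • m = L' • m') :
    Submodule.span K ({L, L'} ∪ Set.range ℓ ∪ Set.range ℓ') ≠ homogeneousSubmodule σ K 1 := by
  let _ : DirectSum.Decomposition 𝓜 := hdecomp.chooseDecomposition
  have : SetLike.GradedSMul (homogeneousSubmodule σ K) 𝓜 :=
    ⟨fun {d t f m} hf hm => by simpa only [vadd_eq_add, add_comm] using hgr f d t hf m hm⟩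
  have : FiniteDimensional K (𝓜 0) := finite_degreeZero σ 𝓜
  have hgen : 𝓜 1 ≤ homogeneousSubmodule σ K 1 • 𝓜 0 := fun m hm =>
    Submodule.span_le.2 (by rintro _ ⟨f, hf, m₀, hm₀, rfl⟩; exact Submodule.smul_mem_smul hf hm₀)
      (hgen1 m hm)
  have hL : ∀ m ∈ 𝓜 0, L • m ∈ Submodule.span K {L, L'} • 𝓜 0 := fun m hm =>
    Submodule.smul_mem_smul (Submodule.subset_span (by simp)) hm
  have hL' : ∀ m ∈ 𝓜 0, L' • m ∈ Submodule.span K {L, L'} • 𝓜 0 := fun m hm =>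
    Submodule.smul_mem_smul (Submodule.subset_span (by simp)) hm
  have : FiniteDimensional K (Submodule.span K {L, L'}) := .span_of_finite K (Set.toFinite _)
  refine span_ne_of_finrank_mul_lt hgen
    ((Nat.mul_le_mul_right _ (finrank_span_pair_le L L')).trans_lt hdim) ?_
  rintro _ (((rfl | rfl) | ⟨i, rfl⟩) | ⟨i, rfl⟩) m hm
  · exact hL m hm
  · exact hL' m hm
  · obtain ⟨n, hn, h⟩ := himg i m hm
    exact h ▸ hL n hn
  · obtain ⟨n, hn, h⟩ := himg' i m hm
    exact h ▸ hL' n hn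

/-- **Corollary (the linear forms do not span).**  Let `M` be a finitely generated graded module
over `R = K[x_0,…,x_r]` with initial degree `0`, with no minimal generator in degree `1`
(i.e. `M_1 = R_1·M_0`), and with `dim_K M_1 > 2·dim_K M_0`.  Let `L, L' ∈ [R]_1`, and suppose
`ℓ̄_1,…,ℓ̄_{r-2}, ℓ̄'_1,…,ℓ̄'_{r-2} ∈ [R]_1` are such that the image of `×ℓ̄_i : M_0 → M_1` is
contained in the image of `×L : M_0 → M_1` for each `i`, and the image of `×ℓ̄'_i : M_0 → M_1`
is contained in the image of `×L' : M_0 → M_1` for each `i`.  Then the `2r-2` linear forms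
`L, L', ℓ̄_1,…,ℓ̄_{r-2}, ℓ̄'_1,…,ℓ̄'_{r-2}` do not span `[R]_1`: their span is a proper subspace
of `[R]_1` (so their common zero locus in `ℙ^r` is nonempty). -/
theorem gradedModule_linear_forms_do_not_span
    {K : Type*} [Field K] [IsAlgClosed K] {r : ℕ}
    {M : Type*} [AddCommGroup M] [Module (MvPolynomial (Fin (r + 1)) K) M]
    [Module K M] [IsScalarTower K (MvPolynomial (Fin (r + 1)) K) M]
    [Module.Finite (MvPolynomial (Fin (r + 1)) K) M]
    (𝓜 : ℕ → Submodule K M)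
    (hdecomp : DirectSum.IsInternal 𝓜)
    (hgr : ∀ (f : MvPolynomial (Fin (r + 1)) K) (d t : ℕ), f.IsHomogeneous d →
      ∀ m ∈ 𝓜 t, f • m ∈ 𝓜 (t + d))
    (hinit : 𝓜 0 ≠ ⊥)
    (hgen1 : ∀ m ∈ 𝓜 1, m ∈ Submodule.span K
      {x : M | ∃ f : MvPolynomial (Fin (r + 1)) K, f.IsHomogeneous 1 ∧
        ∃ m₀ ∈ 𝓜 0, x = f • m₀})
    (hdim : 2 * Module.finrank K (𝓜 0) < Module.finrank K (𝓜 1))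
    (L L' : MvPolynomial (Fin (r + 1)) K)
    (hL : L.IsHomogeneous 1) (hL' : L'.IsHomogeneous 1)
    (ℓ ℓ' : Fin (r - 2) → MvPolynomial (Fin (r + 1)) K)
    (hℓ : ∀ i, (ℓ i).IsHomogeneous 1) (hℓ' : ∀ i, (ℓ' i).IsHomogeneous 1)
    (himg : ∀ i, ∀ m ∈ 𝓜 0, ∃ m' ∈ 𝓜 0, ℓ i • m = L • m')
    (himg' : ∀ i, ∀ m ∈ 𝓜 0, ∃ m' ∈ 𝓜 0, ℓ' i • m = L' • m') :
    Submodule.span K ({L, L'} ∪ Set.range ℓ ∪ Set.range ℓ')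
      ≠ homogeneousSubmodule (Fin (r + 1)) K 1 :=
  gradedModule_linear_forms_do_not_span_general 𝓜 hdecomp hgr hgen1 hdim L L' ℓ ℓ' himg himg'
end

section
/- Let K be a field, S = K[x,y], and J ⊆ S a homogeneous ideal such that for some integer n: (a) the forms in [J]_n have no common zero, i.e. the ideal generated by [J]_n is (x,y)-primary; (b) h_{S/J}(n+1) = h_{S/J}(n) − 1; and (c) J has no minimal generators in any degree > n. Then for all j ≥ n, h_{S/J}(j+1) = max{h_{S/J}(j) − 1, 0}. -/
open MvPolynomial

/-!
Write `[J]_t` for the space of forms of degree `t` in `J`, so that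
`h_{S/J}(t) = t + 1 - dim [J]_t`. The absence of generators in degree `t + 2` means that
`[J]_{t+2} = x[J]_{t+1} + y[J]_{t+1}`, and both summands contain `xy[J]_t`. Hence
`dim [J]_{t+2} + dim [J]_t ≤ 2 dim [J]_{t+1}`; that is, `h_{S/J}` is convex from degree `n` on.
A convex sequence of natural numbers that drops by at most one at `n` and eventually vanishes
drops by exactly one until it reaches zero, as one sees by descending induction from its zeros.
-/

open scoped Pointwise

theorem succ_eq_sub_one_of_convex_of_eventually_zero {h : ℕ → ℕ} {n N : ℕ}
    (hconvex : ∀ t, n ≤ t → 2 * h (t + 1) ≤ h t + h (t + 2))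
    (hdrop : h n ≤ h (n + 1) + 1) (hzero : ∀ t, N ≤ t → h t = 0) {j : ℕ} (hj : n ≤ j) :
    h (j + 1) = h j - 1 := by
  have drop_le_one : ∀ t, n ≤ t → h t ≤ h (t + 1) + 1 := by
    intro t ht
    induction t, ht using Nat.le_induction with
    | base => exact hdrop
    | succ t ht ih => have := hconvex t ht; lia
  refine Nat.decreasingInduction' (P := fun t ↦ h (t + 1) = h t - 1) (fun t _ ht ih ↦ ?_)
    (Nat.le_add_right j N) ?_
  · have := hconvex t (hj.trans ht)
    have := drop_le_one t (hj.trans ht)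
    lia
  · rw [hzero (j + N) (by lia), hzero (j + N + 1) (by lia)]

theorem finrank_smul_of_isLeftRegular {R A : Type*} [CommRing R] [Ring A] [Algebra R A] {x : A}
    (hx : IsLeftRegular x) (V : Submodule R A) :
    Module.finrank R ↥(x • V) = Module.finrank R V :=
  (Submodule.equivMapOfInjective (DistribSMul.toLinearMap R A x) hx V).finrank_eq.symm

theorem finrank_span_pair_mul_add_finrank_le {K A : Type*} [Field K] [CommRing A] [Algebra K A]
    {x y : A} (hx : IsLeftRegular x) (hy : IsLeftRegular y) {V W : Submodule K A}
    [Module.Finite K V] (hW : Submodule.span K {x, y} * W ≤ V) :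
    Module.finrank K ↥(Submodule.span K {x, y} * V) + Module.finrank K W ≤
      2 * Module.finrank K V := by
  have : Module.Finite K ↥(x • V) := Module.Finite.map V (DistribSMul.toLinearMap K A x)
  have : Module.Finite K ↥(y • V) := Module.Finite.map V (DistribSMul.toLinearMap K A y)
  have span_pair_mul (U : Submodule K A) : Submodule.span K {x, y} * U = x • U ⊔ y • U := by
    rw [Submodule.span_insert, Submodule.sup_mul, Submodule.span_singleton_mul,
      Submodule.span_singleton_mul]
  rw [span_pair_mul, sup_le_iff] at hW
  have inf_le : (x * y) • W ≤ x • V ⊓ y • V := by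
    refine le_inf ?_ ?_
    · rw [mul_smul]
      exact smul_mono_right x hW.2
    · rw [mul_comm, mul_smul]
      exact smul_mono_right y hW.1
  calc Module.finrank K ↥(Submodule.span K {x, y} * V) + Module.finrank K W
      = Module.finrank K ↥(x • V ⊔ y • V) + Module.finrank K ↥((x * y) • W) := by
        rw [span_pair_mul, finrank_smul_of_isLeftRegular (hx.mul hy)]
    _ ≤ Module.finrank K ↥(x • V ⊔ y • V) + Module.finrank K ↥(x • V ⊓ y • V) := by
        gcongr
        exact Submodule.finrank_mono inf_le
    _ = 2 * Module.finrank K V := by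
        rw [Submodule.finrank_sup_add_finrank_inf_eq, finrank_smul_of_isLeftRegular hx,
          finrank_smul_of_isLeftRegular hy, two_mul]

section HomogeneousForms

variable {R σ : Type*} [CommSemiring R]

instance [Finite σ] (t : ℕ) : Module.Finite R (homogeneousSubmodule σ R t) :=
  Module.Finite.iff_fg.2 (homogeneousSubmodule_fg σ R t)

theorem homogeneousComponent_add_mul_s16 (s : ℕ) {t : ℕ} (f : MvPolynomial σ R)
    {g : MvPolynomial σ R} (hg : g.IsHomogeneous t) :
    homogeneousComponent (s + t) (f * g) = homogeneousComponent s f * g := by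
  let := gradedAlgebra (σ := σ) (R := R)
  rw [← decomposition.decompose'_apply, ← decomposition.decompose'_apply]
  exact DirectSum.coe_decompose_mul_add_of_right_mem (homogeneousSubmodule σ R) hg

theorem homogeneousSubmodule_le_restrictScalars_of_le {J : Ideal (MvPolynomial σ R)} {m t : ℕ}
    (hJ : homogeneousSubmodule σ R m ≤ J.restrictScalars R) (hmt : m ≤ t) :
    homogeneousSubmodule σ R t ≤ J.restrictScalars R := by
  rw [← Nat.sub_add_cancel hmt, ← homogeneousSubmodule_one_pow, pow_add,
    homogeneousSubmodule_one_pow, homogeneousSubmodule_one_pow]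
  exact Submodule.mul_le.2 fun f _ g hg ↦ J.mul_mem_left f (hJ hg)

theorem homogeneousSubmodule_one_fin_two :
    homogeneousSubmodule (Fin 2) R 1 = Submodule.span R {X 0, X 1} := by
  rw [homogeneousSubmodule_one_eq_span_X]
  congr 1
  ext f
  simp [Fin.exists_fin_two, eq_comm]

/-- The space `[J]_t` of homogeneous polynomials of degree `t` lying in `J`, whose codimension
among all homogeneous polynomials of degree `t` is the Hilbert function of `S/J`. It is encoded as
a submodule over the coefficient ring, so that its dimension and its products make sense. -/
noncomputable def homogeneousPart (J : Ideal (MvPolynomial σ R)) (t : ℕ) :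
    Submodule R (MvPolynomial σ R) :=
  homogeneousSubmodule σ R t ⊓ J.restrictScalars R

theorem homogeneousSubmodule_one_mul_homogeneousPart_le (J : Ideal (MvPolynomial σ R)) (t : ℕ) :
    homogeneousSubmodule σ R 1 * homogeneousPart J t ≤ homogeneousPart J (t + 1) := by
  refine Submodule.mul_le.2 fun l hl f hf ↦ ⟨?_, J.mul_mem_left l hf.2⟩
  rw [add_comm]
  exact IsHomogeneous.mul hl hf.1

end HomogeneousForms

theorem finrank_homogeneousSubmodule {R σ : Type*} [CommRing R] [Nontrivial R] [Fintype σ]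
    (t : ℕ) :
    Module.finrank R (homogeneousSubmodule σ R t) = (Fintype.card σ).multichoose t := by
  classical
  have degree_eq : {d : σ →₀ ℕ | d.degree = t} =
      ↑((Finset.univ : Finset σ).finsuppAntidiag t) := by
    ext d
    simp [Finsupp.degree_eq_sum]
  rw [homogeneousSubmodule_eq_finsupp_supported, degree_eq,
    (AddMonoidAlgebra.supportedEquivFinsupp _).finrank_eq]
  simp [Finset.card_finsuppAntidiag_nat_eq_multichoose]

theorem ker_mkₐ_toLinearMap {R A : Type*} [CommRing R] [CommRing A] [Algebra R A] (J : Ideal A) :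
    LinearMap.ker (Ideal.Quotient.mkₐ R J).toLinearMap = J.restrictScalars R := by
  ext f
  exact Ideal.Quotient.eq_zero_iff_mem

section HilbertFunction

variable {K σ : Type*} [Field K]

instance [Finite σ] (J : Ideal (MvPolynomial σ K)) (t : ℕ) :
    Module.Finite K (homogeneousPart J t) :=
  Submodule.finiteDimensional_inf_left _ _

theorem hilb_eq_zero {J : Ideal (MvPolynomial σ K)} {t : ℕ}
    (hJ : homogeneousSubmodule σ K t ≤ J.restrictScalars K) : hilb J t = 0 := by
  rw [← ker_mkₐ_toLinearMap, LinearMap.le_ker_iff_map] at hJ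
  rw [hilb, hJ, finrank_bot]

theorem hilb_add_finrank_homogeneousPart [Fintype σ] (J : Ideal (MvPolynomial σ K)) (t : ℕ) :
    hilb J t + Module.finrank K (homogeneousPart J t) = (Fintype.card σ).multichoose t := by
  have rank_nullity := LinearMap.finrank_range_add_finrank_ker
    ((Ideal.Quotient.mkₐ K J).toLinearMap.domRestrict (homogeneousSubmodule σ K t))
  rwa [LinearMap.range_domRestrict, LinearMap.ker_domRestrict, ker_mkₐ_toLinearMap,
    ← Submodule.finrank_map_subtype_eq, Submodule.map_comap_subtype,
    finrank_homogeneousSubmodule] at rank_nullity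

theorem compIdeal_le (J : Ideal (MvPolynomial σ K)) (t : ℕ) : compIdeal J t ≤ J :=
  Ideal.span_le.2 Set.inter_subset_left

theorem homogeneousComponent_mem_mul_homogeneousPart {J : Ideal (MvPolynomial σ K)} {t : ℕ}
    {f : MvPolynomial σ K} (hf : f ∈ compIdeal J t) (s : ℕ) :
    homogeneousComponent (s + t) f ∈ homogeneousSubmodule σ K s * homogeneousPart J t := by
  rw [compIdeal, Ideal.span] at hf
  induction hf using Submodule.closure_induction with
  | zero => rw [map_zero]; exact zero_mem _
  | add f g _ _ hf hg => rw [map_add]; exact add_mem hf hg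
  | smul_mem f g hg =>
    rw [smul_eq_mul, homogeneousComponent_add_mul_s16 s f hg.2]
    exact Submodule.mul_mem_mul (homogeneousComponent_isHomogeneous s f) ⟨hg.2, hg.1⟩

theorem homogeneousPart_succ_le_mul {J : Ideal (MvPolynomial σ K)} {t : ℕ}
    (hgen : homogeneousPart J (t + 1) ≤ (compIdeal J t).restrictScalars K) :
    homogeneousPart J (t + 1) ≤ homogeneousSubmodule σ K 1 * homogeneousPart J t := by
  intro f hf
  rw [← homogeneousComponent_eq_self hf.1, add_comm t]
  exact homogeneousComponent_mem_mul_homogeneousPart (hgen hf) 1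

end HilbertFunction

section TwoVariables

variable {K : Type*} [Field K] {J : Ideal (MvPolynomial (Fin 2) K)} {t : ℕ}

theorem finrank_homogeneousPart_add_le_two_mul
    (hgen : homogeneousPart J (t + 2) ≤ (compIdeal J (t + 1)).restrictScalars K) :
    Module.finrank K (homogeneousPart J (t + 2)) + Module.finrank K (homogeneousPart J t) ≤
      2 * Module.finrank K (homogeneousPart J (t + 1)) := by
  have mul_eq : homogeneousSubmodule (Fin 2) K 1 * homogeneousPart J (t + 1) =
      homogeneousPart J (t + 2) :=
    (homogeneousSubmodule_one_mul_homogeneousPart_le J (t + 1)).antisymm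
      (homogeneousPart_succ_le_mul hgen)
  have mul_le := homogeneousSubmodule_one_mul_homogeneousPart_le J t
  rw [homogeneousSubmodule_one_fin_two] at mul_eq mul_le
  rw [← mul_eq]
  exact finrank_span_pair_mul_add_finrank_le isRegular_X.left isRegular_X.left mul_le

theorem two_mul_hilb_succ_le_add
    (hgen : homogeneousPart J (t + 2) ≤ (compIdeal J (t + 1)).restrictScalars K) :
    2 * hilb J (t + 1) ≤ hilb J t + hilb J (t + 2) := by
  have hilb_add (s : ℕ) : hilb J s + Module.finrank K (homogeneousPart J s) = s + 1 := by
    rw [hilb_add_finrank_homogeneousPart, Fintype.card_fin, Nat.multichoose_two]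
  have := hilb_add t
  have := hilb_add (t + 1)
  have := hilb_add (t + 2)
  have := finrank_homogeneousPart_add_le_two_mul hgen
  lia

end TwoVariables

theorem two_variables_hilbert_decreases_by_one_general {K : Type*} [Field K]
    (J : Ideal (MvPolynomial (Fin 2) K)) (n : ℕ)
    (hprimary : ∃ N : ℕ, ∀ f : MvPolynomial (Fin 2) K, f.IsHomogeneous N → f ∈ J)
    (hdrop : hilb J n ≤ hilb J (n + 1) + 1)
    (hnomingen : ∀ t : ℕ, n < t → ∀ f ∈ J, f.IsHomogeneous (t + 1) → f ∈ compIdeal J t) :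
    ∀ j : ℕ, n ≤ j → hilb J (j + 1) = hilb J j - 1 := by
  obtain ⟨N, hN⟩ := hprimary
  have convex (t : ℕ) (ht : n ≤ t) : 2 * hilb J (t + 1) ≤ hilb J t + hilb J (t + 2) :=
    two_mul_hilb_succ_le_add fun f hf ↦ hnomingen (t + 1) (Nat.lt_succ_of_le ht) f hf.2 hf.1
  have eventually_zero (t : ℕ) (ht : N ≤ t) : hilb J t = 0 :=
    hilb_eq_zero (homogeneousSubmodule_le_restrictScalars_of_le hN ht)
  exact fun j hj ↦ succ_eq_sub_one_of_convex_of_eventually_zero convex hdrop eventually_zero hj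

/-- **Proposition (extending Gotzmann's theorem in two variables).**
Let `K` be a field, `S = K[x,y]`, and `J ⊆ S` a homogeneous ideal such that for some `n`:
(a) the linear system defined by `[J]_n` has no base locus, i.e. the ideal generated by `[J]_n`
is `(x,y)`-primary (it contains all forms of some degree `N`);
(b) `h_{S/J}(n+1) = h_{S/J}(n) - 1`; and
(c) `J` has no minimal generators in degree `> n`, i.e. `[J]_{t+1} = S_1·[J]_t` for all `t ≥ n`.
Then for all `j ≥ n`, `h_{S/J}(j+1) = max {h_{S/J}(j) - 1, 0}` (which is truncated subtraction
on `ℕ`). -/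
theorem two_variables_hilbert_decreases_by_one
    {K : Type*} [Field K]
    (J : Ideal (MvPolynomial (Fin 2) K))
    (hJhom : ∀ f ∈ J, ∀ t : ℕ, homogeneousComponent t f ∈ J)
    (n : ℕ)
    (hbpf : ∃ N : ℕ, ∀ f : MvPolynomial (Fin 2) K, f.IsHomogeneous N → f ∈ compIdeal J n)
    (hdrop : hilb J (n + 1) + 1 = hilb J n)
    (hnomingen : ∀ t : ℕ, n ≤ t → ∀ f ∈ J, f.IsHomogeneous (t + 1) → f ∈ compIdeal J t) :
    ∀ j : ℕ, n ≤ j → hilb J (j + 1) = hilb J j - 1 := by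
  exact two_variables_hilbert_decreases_by_one_general J n
    (hbpf.imp fun _ hN f hf ↦ compIdeal_le J n (hN f hf)) hdrop.ge
    fun t ht ↦ hnomingen t ht.le
end

section
/- Let n be a positive integer and k an integer with n+1 ≤ k < C(n+2,2). Write the n-binomial expansion of k as k = C(n+1,n) + C(n,n−1) + ⋯ + C(n−q+2,n−q+1) + m, where the first q terms are the consecutive binomials C(a+1,a) for a = n, n−1, …, n−q+1, and m = C(n−q,n−q) + ⋯ + C(n−q−m+1,n−q−m+1) consists of m terms equal to 1 (with 0 ≤ m ≤ n−q, and m = 0 if q = n). Then k^{⟨n⟩} = C(n+2,n+1) + C(n+1,n) + ⋯ + C(n−q+3,n−q+2) + m, and consequently k^{⟨n⟩} − k = q; i.e. the maximal Macaulay growth of k from degree n to degree n+1 exceeds k by exactly the number q of leading terms of the form C(a+1,a) in its n-binomial expansion. -/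
open MvPolynomial

/-- Macaulay's bound `k^{⟨i⟩}`: if `k = C(k_i,i) + C(k_{i-1},i-1) + ⋯ + C(k_j,j)` is the
`i`-binomial expansion of `k`, then `macaulayUp i k = C(k_i+1,i+1) + ⋯ + C(k_j+1,j+1)`. -/
def macaulayUp : ℕ → ℕ → ℕ
  | 0, _ => 0
  | i + 1, k =>
    if k = 0 then 0
    else
      Nat.choose (Nat.findGreatest (fun b => Nat.choose b (i + 1) ≤ k) (k + i + 1) + 1) (i + 2) +
        macaulayUp i
          (k - Nat.choose (Nat.findGreatest (fun b => Nat.choose b (i + 1) ≤ k) (k + i + 1)) (i + 1))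

/-!
The greedy recursion defining `macaulayUp` recovers every binomial expansion: all the terms of
index below `i` together contribute less than `C(k_i, i - 1)`, which is the gap between
`C(k_i, i)` and `C(k_i + 1, i)`, so the greedy choice at stage `i` is the top `k_i`. Hence
`k^{⟨i⟩}` is computed by shifting any explicit expansion of `k`. In the staircase expansion the
shift turns each `C(a + 1, a) = a + 1` into `a + 2` and leaves the terms `C(a, a) = 1` unchanged,
which is a gain of one for each of the `q` leading terms.
-/

theorem macaulayUp_zero_right (i : ℕ) : macaulayUp i 0 = 0 := by
  cases i <;> simp [macaulayUp]

theorem lt_choose_succ_add (b i : ℕ) : b < b.choose (i + 1) + (i + 1) := by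
  induction b with
  | zero => omega
  | succ b ih =>
    rw [Nat.choose_succ_succ']
    rcases le_or_gt i b with hib | hbi
    · have := Nat.choose_pos hib
      omega
    · omega

theorem findGreatest_choose_le_eq {i k b : ℕ} (hle : b.choose (i + 1) ≤ k)
    (hlt : k < (b + 1).choose (i + 1)) :
    Nat.findGreatest (fun c => c.choose (i + 1) ≤ k) (k + i + 1) = b := by
  have hb : b ≤ k + i + 1 := by
    have := lt_choose_succ_add b i
    omega
  exact Nat.findGreatest_eq_iff.2 ⟨hb, fun _ => hle, fun c hbc _ =>
    (hlt.trans_le (Nat.choose_le_choose _ hbc)).not_ge⟩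

theorem macaulayUp_succ_of_choose_le_of_lt {i k b : ℕ} (hle : b.choose (i + 1) ≤ k)
    (hlt : k < (b + 1).choose (i + 1)) :
    macaulayUp (i + 1) k = (b + 1).choose (i + 2) + macaulayUp i (k - b.choose (i + 1)) := by
  rcases eq_or_ne k 0 with rfl | hk
  · have hb : b < i + 1 := Nat.choose_eq_zero_iff.1 (Nat.le_zero.1 hle)
    rw [Nat.zero_sub, macaulayUp_zero_right, macaulayUp_zero_right,
      Nat.choose_eq_zero_of_lt (by omega)]
  · rw [macaulayUp, if_neg hk, findGreatest_choose_le_eq hle hlt]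

/-- The tops `c i > ⋯ > c j` of an `i`-binomial expansion `∑ a ∈ Ico j (i + 1), C(c a, a)`.
Only the values of `c` on `[j, i]` matter, and `j > i` encodes the empty expansion of `0`.
Asking `a ≤ c a` for every index, rather than only for `j`, spares deriving it from monotonicity. -/
structure IsBinomialTops (j i : ℕ) (c : ℕ → ℕ) : Prop where
  one_le : 1 ≤ j
  le_top : ∀ a ∈ Set.Icc j i, a ≤ c a
  strictMonoOn : StrictMonoOn c (Set.Icc j i)

namespace IsBinomialTops

variable {j i : ℕ} {c : ℕ → ℕ}

theorem of_succ (hc : IsBinomialTops j (i + 1) c) : IsBinomialTops j i c where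
  one_le := hc.one_le
  le_top a ha := hc.le_top a (Set.Icc_subset_Icc_right i.le_succ ha)
  strictMonoOn := hc.strictMonoOn.mono (Set.Icc_subset_Icc_right i.le_succ)

theorem lt_succ (hc : IsBinomialTops j (i + 1) c) (hji : j ≤ i) : c i < c (i + 1) :=
  hc.strictMonoOn ⟨hji, i.le_succ⟩ ⟨hji.trans i.le_succ, le_rfl⟩ i.lt_succ_self

theorem sum_choose_lt (hc : IsBinomialTops j i c) (hji : j ≤ i) :
    ∑ a ∈ Finset.Ico j (i + 1), (c a).choose a < (c i + 1).choose i := by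
  induction i, hji using Nat.le_induction with
  | base =>
    obtain ⟨l, rfl⟩ := Nat.exists_eq_add_of_le' hc.one_le
    have hpos : 0 < (c (l + 1)).choose l :=
      Nat.choose_pos (l.le_succ.trans (hc.le_top _ ⟨le_rfl, le_rfl⟩))
    rw [Nat.Ico_succ_singleton, Finset.sum_singleton, Nat.choose_succ_succ']
    exact Nat.lt_add_of_pos_left hpos
  | succ i hji ih =>
    calc ∑ a ∈ Finset.Ico j (i + 1 + 1), (c a).choose a
        = ∑ a ∈ Finset.Ico j (i + 1), (c a).choose a + (c (i + 1)).choose (i + 1) :=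
          Finset.sum_Ico_succ_top (hji.trans i.le_succ) _
      _ < (c i + 1).choose i + (c (i + 1)).choose (i + 1) := by
          gcongr
          exact ih hc.of_succ
      _ ≤ (c (i + 1)).choose i + (c (i + 1)).choose (i + 1) := by
          gcongr
          exact hc.lt_succ hji
      _ = (c (i + 1) + 1).choose (i + 1) := (Nat.choose_succ_succ' _ _).symm

theorem macaulayUp_sum_choose (hc : IsBinomialTops j i c) :
    macaulayUp i (∑ a ∈ Finset.Ico j (i + 1), (c a).choose a) =
      ∑ a ∈ Finset.Ico j (i + 1), (c a + 1).choose (a + 1) := by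
  induction i with
  | zero => simp [Finset.Ico_eq_empty_of_le hc.one_le, macaulayUp_zero_right]
  | succ i ih =>
    rcases le_or_gt j (i + 1) with hji | hij
    · have hlt := hc.sum_choose_lt hji
      rw [Finset.sum_Ico_succ_top hji] at hlt
      rw [Finset.sum_Ico_succ_top hji, Finset.sum_Ico_succ_top hji,
        macaulayUp_succ_of_choose_le_of_lt (Nat.le_add_left _ _) hlt, Nat.add_sub_cancel,
        ih hc.of_succ, add_comm]
    · simp [Finset.Ico_eq_empty_of_le (Nat.succ_le_of_lt hij), macaulayUp_zero_right]

end IsBinomialTops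

/-- The tops of the staircase expansions: terms of index `a > p` are `C(a + 1, a)`, and terms of
index `a ≤ p` are `C(a, a) = 1`. -/
def staircaseTops (p a : ℕ) : ℕ := if p < a then a + 1 else a

theorem isBinomialTops_staircaseTops (p i : ℕ) {j : ℕ} (hj : 1 ≤ j) :
    IsBinomialTops j i (staircaseTops p) where
  one_le := hj
  le_top a _ := by grind [staircaseTops]
  strictMonoOn a _ b _ hab := by grind [staircaseTops]

theorem sum_Ico_staircaseTops {M : Type*} [AddCommMonoid M] (f : ℕ → ℕ → M) {j p n : ℕ}
    (hjp : j ≤ p + 1) (hpn : p ≤ n) :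
    ∑ a ∈ Finset.Ico j (n + 1), f (staircaseTops p a) a =
      ∑ a ∈ Finset.Ico (p + 1) (n + 1), f (a + 1) a + ∑ a ∈ Finset.Ico j (p + 1), f a a := by
  rw [← Finset.sum_Ico_consecutive _ hjp (Nat.succ_le_succ hpn), add_comm]
  congr 1
  · exact Finset.sum_congr rfl fun a ha => by
      rw [staircaseTops, if_pos (Nat.lt_of_succ_le (Finset.mem_Ico.1 ha).1)]
  · exact Finset.sum_congr rfl fun a ha => by
      rw [staircaseTops, if_neg (Nat.lt_succ_iff.1 (Finset.mem_Ico.1 ha).2).not_gt]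

theorem macaulayUp_staircase {n p m : ℕ} (hpn : p ≤ n) (hm : m ≤ p) :
    macaulayUp n (∑ a ∈ Finset.Ico (p + 1) (n + 1), (a + 1).choose a + m) =
      ∑ a ∈ Finset.Ico (p + 2) (n + 2), (a + 1).choose a + m := by
  have hj : p - m + 1 ≤ p + 1 := by omega
  have hones : p + 1 - (p - m + 1) = m := by omega
  have htops := isBinomialTops_staircaseTops p n (Nat.le_add_left 1 (p - m))
  have hshift := htops.macaulayUp_sum_choose
  rw [sum_Ico_staircaseTops Nat.choose hj hpn,
    sum_Ico_staircaseTops (fun b a => (b + 1).choose (a + 1)) hj hpn,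
    Finset.sum_Ico_add' (fun a => (a + 1).choose a) (p + 1) (n + 1) 1] at hshift
  simpa only [Nat.choose_self, Finset.sum_const, Nat.card_Ico, hones, smul_eq_mul, mul_one]
    using hshift

theorem sum_Ico_succ_choose_succ_self (u v : ℕ) :
    ∑ a ∈ Finset.Ico (u + 1) (v + 1), (a + 1).choose a =
      ∑ a ∈ Finset.Ico u v, (a + 1).choose a + (v - u) := by
  rw [← Finset.sum_Ico_add' (fun a => (a + 1).choose a) u v 1]
  simp only [Nat.choose_succ_self_right, Finset.sum_add_distrib, Finset.sum_const, Nat.card_Ico,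
    smul_eq_mul, mul_one]

/-- **Binomial identity (leading staircase).**  Let `n ≥ 1` and let `k` have `n`-binomial
expansion `k = C(n+1,n) + C(n,n-1) + ⋯ + C(n-q+2,n-q+1) + m`, where the first `q ≥ 1` terms are
the consecutive binomials `C(a+1,a)` for `a = n, n-1, …, n-q+1` and `m ≤ n-q` counts trailing
terms equal to `1` (so `m = 0` when `q = n`); this covers exactly the range
`n+1 ≤ k < C(n+2,2)`.  Then
`k^{⟨n⟩} = C(n+2,n+1) + C(n+1,n) + ⋯ + C(n-q+3,n-q+2) + m`, and consequently
`k^{⟨n⟩} - k = q`: the maximal Macaulay growth exceeds `k` by exactly the number `q` of leading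
terms of the form `C(a+1,a)`. -/
theorem macaulayUp_of_staircase_expansion
    (n q m k : ℕ) (hn : 1 ≤ n) (hq1 : 1 ≤ q) (hqn : q ≤ n) (hm : m ≤ n - q)
    (hk : k = (∑ a ∈ Finset.Ico (n - q + 1) (n + 1), Nat.choose (a + 1) a) + m) :
    macaulayUp n k = (∑ a ∈ Finset.Ico (n - q + 2) (n + 2), Nat.choose (a + 1) a) + m ∧
      macaulayUp n k = k + q := by
  have hshift := macaulayUp_staircase (Nat.sub_le n q) hm
  subst hk
  refine ⟨hshift, ?_⟩
  calc macaulayUp n (∑ a ∈ Finset.Ico (n - q + 1) (n + 1), Nat.choose (a + 1) a + m)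
      = ∑ a ∈ Finset.Ico (n - q + 2) (n + 2), Nat.choose (a + 1) a + m := hshift
    _ = ∑ a ∈ Finset.Ico (n - q + 1) (n + 1), Nat.choose (a + 1) a + (n + 1 - (n - q + 1)) + m :=
        congrArg (· + m) (sum_Ico_succ_choose_succ_self _ _)
    _ = ∑ a ∈ Finset.Ico (n - q + 1) (n + 1), Nat.choose (a + 1) a + m + q := by omega
end
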